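/- arXiv:1112.2118 — 2 statements merged into one kernel-verified Lean document; each statement's English description precedes it below -/
import Mathlib

section
/- There exists δ > 0 such that for every s ≥ 7, every A with 7/20 ≤ A ≤ 1 − 1/Q, and every z with 0 ≤ z ≤ 1/(2Q): OPT(1, A, A, 1, 1/(2Q)+z, 1/(2Q)−z, s) ≤ 3 − δ. -/
/-- `q(x) = exp(x) - x - 1`. -/
noncomputable def q (x : ℝ) : ℝ := Real.exp x - x - 1

/-- `Q(x) = x·(exp(x) − 1)/(exp(x) − x − 1)`. -/
noncomputable def Qf (x : ℝ) : ℝ := x * (Real.exp x - 1) / (Real.exp x - x - 1)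

/-- `OPT(x₀,x₁,x₂,y₀,y₁,y₂,s) = OPT1 · OPT2 · OPT3` with `Q = Q(s)`. -/
noncomputable def OPT (x₀ x₁ x₂ y₀ y₁ y₂ s : ℝ) : ℝ :=
  ((q (s*x₀) + q (s*x₁) + q (s*x₂)) / q s) *
  (1 / (x₀*y₀ + x₁*y₁ + x₂*y₂)) ^ (Qf s) *
  ((y₀+y₁+y₂) ^ (Qf s) +
    2 * (y₀^2 + y₁^2 + y₂^2 - y₀*y₁ - y₀*y₂ - y₁*y₂) ^ (Qf s / 2))

lemma exp_frac_le (p n : ℕ) (B : ℝ) (hn : n ≠ 0) (hB : 0 ≤ B)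
    (h : (2.7182818286 : ℝ) ^ p ≤ B ^ n) : Real.exp ((p : ℝ) / n) ≤ B := by
  have hn' : (n : ℝ) ≠ 0 := by exact_mod_cast hn
  refine le_of_pow_le_pow_left₀ hn hB ?_
  rw [← Real.exp_nat_mul]
  have : (n : ℝ) * ((p : ℝ) / n) = p * 1 := by field_simp
  rw [this, Real.exp_nat_mul]
  exact (pow_le_pow_left₀ (Real.exp_pos _).le Real.exp_one_lt_d9.le p).trans h

lemma exp_neg_frac_le (p n : ℕ) (B : ℝ) (hn : n ≠ 0) (hB : 0 ≤ B)
    (h : 1 ≤ B ^ n * (2.7182818283 : ℝ) ^ p) : Real.exp (-((p : ℝ) / n)) ≤ B := by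
  have hn' : (n : ℝ) ≠ 0 := by exact_mod_cast hn
  refine le_of_pow_le_pow_left₀ hn hB ?_
  rw [← Real.exp_nat_mul]
  have : (n : ℝ) * (-((p : ℝ) / n)) = -(p * 1) := by field_simp
  rw [this, Real.exp_neg, Real.exp_nat_mul, inv_le_iff_one_le_mul₀ (by positivity)]
  refine h.trans ?_
  gcongr
  exact Real.exp_one_gt_d9.le

lemma q_pos (s : ℝ) (hs : 0 < s) : 0 < q s := by
  unfold q
  have := Real.add_one_lt_exp hs.ne'
  linarith

lemma q_ratio (s A : ℝ) (hs : 0 < s) (hA : 0 ≤ A) (hA1 : A ≤ 1) :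
    q (s * A) ≤ q s * Real.exp (-(Qf s * (1 - A))) := by
  have hq := q_pos s hs
  set c := (Real.exp s - 1) / q s with hc
  have hQ : Qf s = s * c := by
    rw [hc]; unfold Qf q; ring
  have hd : ∀ x : ℝ, HasDerivAt (fun x => q x * Real.exp (-(c * x)))
      (((Real.exp x - 1) - c * q x) * Real.exp (-(c * x))) x := by
    intro x
    have h1 : HasDerivAt q (Real.exp x - 1) x := by
      unfold q
      exact ((Real.hasDerivAt_exp x).sub (hasDerivAt_id x)).sub_const 1
    have h2 : HasDerivAt (fun x => Real.exp (-(c * x))) (Real.exp (-(c*x)) * (-(c * 1))) x :=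
      (((hasDerivAt_id x).const_mul c).neg).exp
    exact (h1.mul h2).congr_deriv (by ring)
  have hm : MonotoneOn (fun x => q x * Real.exp (-(c * x))) (Set.Icc 0 s) := by
    apply monotoneOn_of_deriv_nonneg (convex_Icc 0 s)
    · exact fun x _ => (hd x).continuousAt.continuousWithinAt
    · exact fun x _ => (hd x).differentiableAt.differentiableWithinAt
    · intro x hx
      rw [interior_Icc] at hx
      rw [(hd x).deriv]
      refine mul_nonneg ?_ (Real.exp_pos _).le
      have hconv := convexOn_exp.2 (Set.mem_univ (0:ℝ)) (Set.mem_univ s)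
        (show 0 ≤ 1 - x / s by rw [sub_nonneg, div_le_one hs]; exact hx.2.le)
        (show 0 ≤ x / s from div_nonneg hx.1.le hs.le) (by ring)
      simp only [smul_eq_mul, mul_zero, zero_add, Real.exp_zero, mul_one] at hconv
      rw [div_mul_cancel₀ _ hs.ne'] at hconv
      have h3 : s * (Real.exp x - 1) ≤ x * (Real.exp s - 1) := by
        have : s * Real.exp x ≤ s * (1 - x / s + x / s * Real.exp s) :=
          mul_le_mul_of_nonneg_left hconv hs.le
        have e : s * (1 - x / s + x / s * Real.exp s) = s - x + x * Real.exp s := by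
          field_simp
        rw [e] at this; linarith
      rw [hc, sub_nonneg, div_mul_eq_mul_div, div_le_iff₀ hq]
      unfold q
      nlinarith
  have := hm (a := s * A) (b := s) ⟨by positivity, by nlinarith⟩ ⟨hs.le, le_rfl⟩ (by nlinarith)
  simp only at this
  have e : Real.exp (-(Qf s * (1 - A))) = Real.exp (-(c * s)) * Real.exp (c * (s * A)) := by
    rw [← Real.exp_add, hQ]; ring_nf
  rw [e]
  have h4 := mul_le_mul_of_nonneg_right this (Real.exp_pos (c * (s * A))).le
  rw [mul_assoc, ← Real.exp_add, neg_add_cancel, Real.exp_zero, mul_one] at h4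
  linarith

lemma Q_ge (s : ℝ) (hs : 7 ≤ s) : 7 ≤ Qf s := by
  have hq := q_pos s (by linarith)
  unfold q at hq
  unfold Qf
  rw [le_div_iff₀ hq]
  nlinarith

noncomputable def GG (Q A : ℝ) : ℝ :=
  Real.exp (-(Q * Real.log (1 + A / Q))) +
    2 * Real.exp (-(Q * (1 - A)) - Q * Real.log (1 + A / Q))

lemma GG_convex (Q : ℝ) (hQ : 7 ≤ Q) : ConvexOn ℝ (Set.Ici 0) (GG Q) := by
  have hQ0 : 0 < Q := by linarith
  have hlog : ConvexOn ℝ (Set.Ici (0:ℝ)) (fun A => -(Q * Real.log (1 + A / Q))) := by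
    refine ⟨convex_Ici 0, ?_⟩
    intro x hx y hy a b ha hb hab
    simp only [Set.mem_Ici] at hx hy
    have hx' : 0 < 1 + x / Q := by positivity
    have hy' : 0 < 1 + y / Q := by positivity
    have := strictConcaveOn_log_Ioi.concaveOn.2 (Set.mem_Ioi.2 hx') (Set.mem_Ioi.2 hy') ha hb hab
    simp only [smul_eq_mul] at this ⊢
    have e : a * (1 + x / Q) + b * (1 + y / Q) = 1 + (a * x + b * y) / Q := by
      have : b = 1 - a := by linarith
      subst this; ring
    rw [e] at this
    nlinarith
  have hexp : ∀ f : ℝ → ℝ, ConvexOn ℝ (Set.Ici (0:ℝ)) f →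
      ConvexOn ℝ (Set.Ici (0:ℝ)) (fun A => Real.exp (f A)) := by
    intro f hf
    refine ⟨convex_Ici 0, ?_⟩
    intro x hx y hy a b ha hb hab
    exact (Real.exp_le_exp.2 (hf.2 hx hy ha hb hab)).trans
      (convexOn_exp.2 (Set.mem_univ _) (Set.mem_univ _) ha hb hab)
  have hlin : ConvexOn ℝ (Set.Ici (0:ℝ)) (fun A => -(Q * (1 - A)) - Q * Real.log (1 + A / Q)) := by
    refine ⟨convex_Ici 0, ?_⟩
    intro x hx y hy a b ha hb hab
    have := hlog.2 hx hy ha hb hab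
    simp only [smul_eq_mul] at this ⊢
    have : b = 1 - a := by linarith
    subst this
    linarith
  have := (hexp _ hlog).add ((hexp _ hlin).smul (show (0:ℝ) ≤ 2 by norm_num))
  exact this

noncomputable def DD (Q : ℝ) : ℝ :=
  Real.exp (Q * Real.log (1 + 1 / Q)) + 2 * Real.exp (-((1 - 1 / Q) / 2))

/-- General endpoint bound. -/
lemma endpoint (Q A e a b : ℝ) (hQ : 7 ≤ Q) (hA : 0 ≤ A)
    (he : Real.exp (-(Q * (1 - A))) ≤ e)
    (ha : Real.exp ((1 - A) / (1 + A / Q)) ≤ a)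
    (hb : Real.exp (-((1 - 1 / Q) / 2) - A + A ^ 2 / (2 * Q)) ≤ b) :
    GG Q A * DD Q ≤ (1 + 2 * e) * (a + 2 * b) := by
  have hQ0 : 0 < Q := by linarith
  have hpos : 0 < 1 + A / Q := by positivity
  have hpos1 : 0 < 1 + 1 / Q := by positivity
  have e1 : GG Q A * DD Q = (1 + 2 * Real.exp (-(Q * (1 - A)))) *
      (Real.exp (Q * Real.log (1 + 1 / Q) - Q * Real.log (1 + A / Q)) +
        2 * Real.exp (-((1 - 1 / Q) / 2) - Q * Real.log (1 + A / Q))) := by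
    unfold GG DD
    simp only [sub_eq_add_neg, Real.exp_add]
    ring
  rw [e1]
  have h1 : Q * Real.log (1 + 1 / Q) - Q * Real.log (1 + A / Q) ≤ (1 - A) / (1 + A / Q) := by
    have := Real.log_le_sub_one_of_pos (div_pos hpos1 hpos)
    rw [Real.log_div hpos1.ne' hpos.ne'] at this
    have h2 := mul_le_mul_of_nonneg_left this hQ0.le
    have h3 : Q * ((1 + 1 / Q) / (1 + A / Q) - 1) = (1 - A) / (1 + A / Q) := by
      have : Q + A ≠ 0 := by positivity
      field_simp
      ring
    rw [h3] at h2
    linarith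
  have h2 : A - A ^ 2 / (2 * Q) ≤ Q * Real.log (1 + A / Q) := by
    have := Real.le_log_one_add_of_nonneg (show 0 ≤ A / Q by positivity)
    have h2 := mul_le_mul_of_nonneg_left this hQ0.le
    refine le_trans ?_ h2
    have h4 : Q * (2 * (A / Q) / (A / Q + 2)) = A - A ^ 2 / (2 * Q + A) := by
      have : A + 2 * Q ≠ 0 := by positivity
      have : 2 * Q + A ≠ 0 := by positivity
      have : A / Q + 2 ≠ 0 := by positivity
      field_simp
      ring
    rw [h4]
    gcongr
    linarith
  have h3 := (Real.exp_le_exp.2 h1).trans ha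
  have h4 : Real.exp (-((1 - 1 / Q) / 2) - Q * Real.log (1 + A / Q)) ≤ b :=
    (Real.exp_le_exp.2 (by linarith)).trans hb
  have := Real.exp_pos (-(Q * (1 - A)))
  have he0 : 0 ≤ 1 + 2 * e := by linarith
  gcongr

lemma end1 (Q : ℝ) (hQ : 7 ≤ Q) : GG Q (7/20) * DD Q ≤ 2.99 := by
  have hQ0 : 0 < Q := by linarith
  have ht : 1 / Q ≤ 1 / 7 := by gcongr
  have ht0 : 0 < 1 / Q := by positivity
  refine (endpoint Q (7/20) 0.0111 1.92 0.47 hQ (by norm_num) ?_ ?_ ?_).trans (by norm_num)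
  · refine le_trans (Real.exp_le_exp.2 ?_)
      (exp_neg_frac_le 91 20 _ (by norm_num) (by norm_num) (by norm_num))
    push_cast; linarith
  · refine le_trans (Real.exp_le_exp.2 ?_)
      (exp_frac_le 13 20 _ (by norm_num) (by norm_num) (by norm_num))
    push_cast
    rw [div_le_iff₀ (by positivity)]
    have : 0 ≤ 7 / 20 / Q := by positivity
    linarith
  · refine le_trans (Real.exp_le_exp.2 ?_)
      (exp_neg_frac_le 76 100 _ (by norm_num) (by norm_num) (by norm_num))
    have : (7/20 : ℝ) ^ 2 / (2 * Q) = 49 / 800 * (1 / Q) := by field_simp; norm_num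
    rw [this]
    push_cast; linarith

lemma end2 (Q : ℝ) (hQ : 7 ≤ Q) : GG Q (1 - 1 / Q) * DD Q ≤ 2.99 := by
  have hQ0 : 0 < Q := by linarith
  have ht : 1 / Q ≤ 1 / 7 := by gcongr
  have ht0 : 0 < 1 / Q := by positivity
  refine (endpoint Q (1 - 1 / Q) 0.3679 1.136 0.2925 hQ (by linarith) ?_ ?_ ?_).trans (by norm_num)
  · refine le_trans (Real.exp_le_exp.2 ?_)
      (exp_neg_frac_le 1 1 _ (by norm_num) (by norm_num) (by norm_num))
    have : Q * (1 - (1 - 1 / Q)) = 1 := by field_simp; ring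
    rw [this]; norm_num
  · refine le_trans (Real.exp_le_exp.2 ?_)
      (exp_frac_le 7 55 _ (by norm_num) (by norm_num) (by norm_num))
    have e : (1 - 1 / Q) / Q = (1 / Q) - (1 / Q) ^ 2 := by ring
    rw [e]
    generalize 1 / Q = t at *
    push_cast
    rw [div_le_iff₀ (by nlinarith)]
    nlinarith
  · refine le_trans (Real.exp_le_exp.2 ?_)
      (exp_neg_frac_le 123 100 _ (by norm_num) (by norm_num) (by norm_num))
    have e : (1 - 1 / Q) ^ 2 / (2 * Q) = (1 - 1 / Q) ^ 2 * (1 / Q) / 2 := by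
      ring
    rw [e]
    generalize 1 / Q = t at *
    push_cast
    nlinarith [mul_nonneg ht0.le (sub_nonneg.2 ht), mul_nonneg (mul_nonneg ht0.le ht0.le) (sub_nonneg.2 ht)]

theorem stmt7 :
    ∃ δ : ℝ, 0 < δ ∧ ∀ s : ℝ, 7 ≤ s →
      ∀ A : ℝ, 7/20 ≤ A → A ≤ 1 - 1/(Qf s) →
        ∀ z : ℝ, 0 ≤ z → z ≤ 1/(2 * Qf s) →
          OPT 1 A A 1 (1/(2 * Qf s) + z) (1/(2 * Qf s) - z) s ≤ 3 - δ := by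
  refine ⟨0.01, by norm_num, ?_⟩
  intro s hs A hA hA1 z hz hz1
  have hs0 : 0 < s := by linarith
  have hQ := Q_ge s hs
  have hqs := q_pos s hs0
  have hr := q_ratio s A hs0 (by linarith)
    (hA1.trans (by linarith [show 0 ≤ 1 / Qf s by positivity]))
  unfold OPT
  generalize Qf s = Q at *
  have hQ0 : 0 < Q := by linarith
  have ht : 1 / Q ≤ 1 / 7 := by gcongr
  have ht0 : 0 < 1 / Q := by positivity
  have hpos : 0 < 1 + A / Q := by have : 0 ≤ A := by linarith
                                  positivity
  have hhalf : 1 / (2 * Q) = 1 / Q / 2 := by field_simp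
  have f1 : (q (s * 1) + q (s * A) + q (s * A)) / q s ≤ 1 + 2 * Real.exp (-(Q * (1 - A))) := by
    rw [div_le_iff₀ hqs, mul_one]; linarith
  have f2 : (1 / (1 * 1 + A * (1 / (2 * Q) + z) + A * (1 / (2 * Q) - z))) ^ Q
      = Real.exp (-(Q * Real.log (1 + A / Q))) := by
    have : 1 * 1 + A * (1 / (2 * Q) + z) + A * (1 / (2 * Q) - z) = 1 + A / Q := by
      field_simp; ring
    rw [this, Real.rpow_def_of_pos (by positivity), one_div, Real.log_inv]
    ring_nf
  have f3 : (1 + (1 / (2 * Q) + z) + (1 / (2 * Q) - z)) ^ Q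
      = Real.exp (Q * Real.log (1 + 1 / Q)) := by
    have : 1 + (1 / (2 * Q) + z) + (1 / (2 * Q) - z) = 1 + 1 / Q := by
      field_simp; ring
    rw [this, Real.rpow_def_of_pos (by positivity)]
    ring_nf
  have f4 : (1 ^ 2 + (1 / (2 * Q) + z) ^ 2 + (1 / (2 * Q) - z) ^ 2 - 1 * (1 / (2 * Q) + z)
      - 1 * (1 / (2 * Q) - z) - (1 / (2 * Q) + z) * (1 / (2 * Q) - z)) ^ (Q / 2)
      ≤ Real.exp (-((1 - 1 / Q) / 2)) := by
    have e : Real.exp (-((1 - 1 / Q) / 2)) = Real.exp (-(1 / Q - (1 / Q) ^ 2)) ^ (Q / 2) := by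
      rw [← Real.exp_mul]
      congr 1
      field_simp
    rw [e]
    have := Real.add_one_le_exp (-(1 / Q - (1 / Q) ^ 2))
    rw [hhalf] at hz1 ⊢
    generalize 1 / Q = t at *
    apply Real.rpow_le_rpow
    · nlinarith
    · nlinarith
    · positivity
  have hC : GG Q A ≤ max (GG Q (7/20)) (GG Q (1 - 1 / Q)) :=
    ((GG_convex Q hQ).subset (Set.Icc_subset_Ici_self.trans (Set.Ici_subset_Ici.2 (by norm_num)))
      (convex_Icc (7/20) (1 - 1 / Q))).le_max_of_mem_Icc ⟨le_rfl, by linarith⟩ ⟨by linarith, le_rfl⟩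
      ⟨hA, hA1⟩
  have hD : 0 ≤ DD Q := by unfold DD; positivity
  have hfin : GG Q A * DD Q ≤ 2.99 := by
    rcases le_max_iff.1 hC with h | h
    · exact (mul_le_mul_of_nonneg_right h hD).trans (end1 Q hQ)
    · exact (mul_le_mul_of_nonneg_right h hD).trans (end2 Q hQ)
  rw [f2, f3]
  have hG : GG Q A = (1 + 2 * Real.exp (-(Q * (1 - A)))) * Real.exp (-(Q * Real.log (1 + A / Q))) := by
    unfold GG
    simp only [sub_eq_add_neg, Real.exp_add]
    ring
  refine le_trans ?_ (hfin.trans (by norm_num))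
  rw [hG]
  unfold DD
  refine mul_le_mul ?_ (by linarith) ?_ (by positivity)
  · exact mul_le_mul_of_nonneg_right f1 (Real.exp_pos _).le
  · refine add_nonneg (Real.exp_pos _).le (mul_nonneg (by norm_num) (Real.rpow_nonneg ?_ _))
    rw [hhalf]
    nlinarith
end

section
/- Let s ≥ 15 and set A(x) = 1 + 7/(10Q)·x − 7/(10Q). Then: (a) the function y ↦ OPT(1, A(y), A(y), 1, y, y, s) is strictly increasing on 4/10 ≤ y ≤ 1, and its value at y = 1 is 3; (b) for every fixed y with 4/10 ≤ y ≤ 1, the function z ↦ OPT(1, A(y+z), A(y−z), 1, y+z, y−z, s) is decreasing on 0 ≤ z ≤ min{y, 1−y}. -/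
lemma aux_E (s : ℝ) (hs : 15 ≤ s) : 100 * (s + 1) ≤ Real.exp s := by
  have h := Real.pow_div_factorial_le_exp s (by linarith) 4
  have h4 : ((Nat.factorial 4 : ℕ) : ℝ) = 24 := by norm_num [Nat.factorial]
  rw [h4] at h
  have h2 : (225 : ℝ) ≤ s ^ 2 := by nlinarith
  have h3 : 225 * s ^ 2 ≤ s ^ 4 := by nlinarith [sq_nonneg s]
  nlinarith

lemma aux_q (s : ℝ) (hs : 15 ≤ s) : 0 < q s := by
  have := aux_E s hs
  unfold q; linarith

lemma aux_Q (s : ℝ) (hs : 15 ≤ s) : 15 ≤ Qf s := by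
  have h := aux_E s hs
  have h1 : 0 < Real.exp s - s - 1 := by linarith
  unfold Qf
  rw [le_div_iff₀ h1]
  nlinarith

/-- `t = s * a`. -/
lemma aux_t (s : ℝ) (hs : 15 ≤ s) :
    (s * (7/(10 * Qf s))) * (Real.exp s - 1) = 7/10 * q s := by
  have h := aux_E s hs
  have h1 : 0 < Real.exp s - s - 1 := by linarith
  have h2 : 0 < Real.exp s - 1 := by linarith
  have h3 : 0 < s := by linarith
  unfold Qf q
  field_simp

lemma aux_t_bounds (s t : ℝ) (hs : 15 ≤ s) (ht : t * (Real.exp s - 1) = 7/10 * q s) :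
    0 < t ∧ t ≤ 7/10 ∧ t * Real.exp s ≤ 7/10 * (Real.exp s - 1) := by
  have h := aux_E s hs
  have hq := aux_q s hs
  have h2 : 0 < Real.exp s - 1 := by linarith
  have h0 : 0 < t := by
    by_contra hc
    push Not at hc
    nlinarith
  have hq' : q s = Real.exp s - s - 1 := rfl
  have h1 : t ≤ 7/10 := by
    by_contra hc
    push Not at hc
    nlinarith
  refine ⟨h0, h1, ?_⟩
  nlinarith

lemma aux_pow (Q : ℝ) (hQ : 15 ≤ Q) : Q * (51/100 : ℝ) ^ (Q - 2) ≤ 1/100 := by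
  have h1 : (51/100 : ℝ) ^ (Q - 2) = (51/100 : ℝ) ^ (13:ℕ) * (51/100 : ℝ) ^ (Q - 15) := by
    rw [← Real.rpow_natCast, ← Real.rpow_add (by norm_num)]
    congr 1; push_cast; ring
  have h2 : (51/100 : ℝ) ^ (Q - 15) * Q ≤ 15 := by
    rw [Real.rpow_def_of_pos (by norm_num)]
    have hl : Real.log (51/100) ≤ -(49/100) := by
      have := Real.log_le_sub_one_of_pos (show (0:ℝ) < 51/100 by norm_num)
      linarith
    have h3 : Real.exp (Real.log (51/100) * (Q - 15)) ≤ Real.exp (-((Q-15)/15)) := by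
      apply Real.exp_le_exp.mpr
      nlinarith
    have h4 : (Q-15)/15 + 1 ≤ Real.exp ((Q-15)/15) := Real.add_one_le_exp _
    have h5 : Real.exp (-((Q-15)/15)) * Real.exp ((Q-15)/15) = 1 := by
      rw [← Real.exp_add]; simp
    have h6 : 0 < Real.exp (-((Q-15)/15)) := Real.exp_pos _
    have h7 : Q ≤ 15 * Real.exp ((Q-15)/15) := by linarith
    calc _ ≤ Real.exp (-((Q-15)/15)) * Q := by
          apply mul_le_mul_of_nonneg_right h3; linarith
      _ ≤ Real.exp (-((Q-15)/15)) * (15 * Real.exp ((Q-15)/15)) :=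
          mul_le_mul_of_nonneg_left h7 h6.le
      _ = 15 := by linear_combination 15 * h5
  rw [h1]
  have h8 : (0:ℝ) < (51/100 : ℝ) ^ (13:ℕ) := by positivity
  calc _ = (51/100 : ℝ) ^ (13:ℕ) * ((51/100 : ℝ) ^ (Q - 15) * Q) := by ring
    _ ≤ (51/100 : ℝ) ^ (13:ℕ) * 15 := mul_le_mul_of_nonneg_left h2 h8.le
    _ ≤ _ := by norm_num

/-! ### Part (a) -/

lemma partA_f1 (s t d : ℝ) (hs : 15 ≤ s) (ht : t * (Real.exp s - 1) = 7/10 * q s)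
    (hd0 : 0 ≤ d) (hd : d ≤ 6/10) :
    7/5 * (1/3 - 11/100 * d) * (1 + 2 * q (s - t * d) / q s)
      ≤ 2 * t * (Real.exp (s - t * d) - 1) / q s := by
  obtain ⟨t0, t1, t2⟩ := aux_t_bounds s t hs ht
  have h := aux_E s hs
  have hq := aux_q s hs
  have hE : 0 < Real.exp s - 1 := by linarith
  set φ := (Real.exp (s - t * d) - 1) / (Real.exp s - 1) with hφ
  have e1 : 2 * t * (Real.exp (s - t * d) - 1) / q s = 7/5 * φ := by
    rw [hφ, div_eq_iff hq.ne', mul_div_assoc', div_mul_eq_mul_div, eq_div_iff hE.ne']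
    linear_combination 2 * (Real.exp (s - t * d) - 1) * ht
  have hφ1 : 1 - 7/10 * d ≤ φ := by
    rw [hφ, le_div_iff₀ hE]
    have hx : Real.exp (s - t * d) = Real.exp s * Real.exp (-(t * d)) := by
      rw [← Real.exp_add]; ring_nf
    have := Real.add_one_le_exp (-(t*d))
    have h3 := mul_le_mul_of_nonneg_left this (Real.exp_pos s).le
    rw [hx]
    nlinarith [mul_le_mul_of_nonneg_left t2 hd0]
  have hφ2 : q (s - t * d) / q s ≤ φ := by
    rw [hφ, div_le_div_iff₀ hq hE]
    have hs0 : 0 < s := by linarith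
    have hx0 : 0 ≤ (s - t * d) / s := by
      apply div_nonneg _ hs0.le; nlinarith
    have hx1 : 0 ≤ 1 - (s - t * d) / s := by
      rw [sub_nonneg, div_le_one hs0]; nlinarith
    have hc := convexOn_exp.2 (Set.mem_univ s) (Set.mem_univ 0) hx0 hx1 (by ring)
    simp only [smul_eq_mul, mul_zero, add_zero, Real.exp_zero, mul_one] at hc
    rw [div_mul_cancel₀ _ hs0.ne'] at hc
    have hc2 : s * (Real.exp (s - t*d) - 1) ≤ (s - t*d) * (Real.exp s - 1) := by
      have := mul_le_mul_of_nonneg_left hc hs0.le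
      have e : s * ((s - t * d) / s * Real.exp s + (1 - (s - t * d) / s))
        = (s - t*d) * Real.exp s + (s - (s - t*d)) := by field_simp
      rw [e] at this
      linarith
    unfold q
    nlinarith
  rw [e1, mul_div_assoc]
  have h5 : 0 ≤ 1/3 - 11/100 * d := by linarith
  have h6 := mul_le_mul_of_nonneg_left hφ2 h5
  have h7 := mul_le_mul_of_nonneg_left hφ1 (show 0 ≤ 1/3 + 22/100 * d by linarith)
  nlinarith

lemma partA_f2 (a d : ℝ) (ha0 : 0 ≤ a) (ha : a ≤ 7/150) (hd0 : 0 ≤ d) (hd : d ≤ 6/10) :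
    (3 - 6*d + 2*d^2) / (3-2*d)^2 / (1 - 2 * a * (d * (1-d)/(3-2*d))) ≤ 1/3 - 18/100 * d := by
  have h3 : 0 < 3 - 2*d := by linarith
  have hh : d * (1-d)/(3-2*d) ≤ d/3 := by
    rw [div_le_div_iff₀ h3 (by norm_num)]; nlinarith
  have hh0 : 0 ≤ d * (1-d)/(3-2*d) := div_nonneg (mul_nonneg hd0 (by linarith)) h3.le
  set h := d * (1-d)/(3-2*d)
  have hah : 2 * a * h ≤ 7/225 * d := by nlinarith
  have hpos : 0 < 1 - 2 * a * h := by linarith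
  rw [div_le_iff₀ hpos]
  have h1 : (3 - 6*d + 2*d^2) / (3-2*d)^2 ≤ 1/3 - 2/10 * d := by
    rw [div_le_iff₀ (by positivity)]
    nlinarith [mul_nonneg hd0 hd0, mul_nonneg (mul_nonneg hd0 hd0) (sub_nonneg.2 hd)]
  nlinarith

lemma partA_f3 (Q d : ℝ) (hQ : 15 ≤ Q) (hd0 : 0 < d) (hd : d ≤ 6/10) :
    2 * (3/(3-2*d)^2 * Q * (d/(3-2*d))^(Q-1)) / (1 + 2 * (d/(3-2*d))^Q) ≤ 2/100 * d := by
  have h3 : 0 < 3 - 2*d := by linarith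
  have hr0 : 0 < d/(3-2*d) := div_pos hd0 h3
  have hr1 : d/(3-2*d) ≤ d * (10/18) := by
    rw [div_le_iff₀ h3]; nlinarith
  set r := d/(3-2*d)
  have hrQ : 0 < r^Q := Real.rpow_pos_of_pos hr0 _
  have e : r^(Q-1) = r^(Q-2) * r := by
    rw [← Real.rpow_add_one hr0.ne']; congr 1; ring
  have hp : r^(Q-2) ≤ (51/100:ℝ)^(Q-2) :=
    Real.rpow_le_rpow hr0.le (by linarith) (by linarith)
  have hp0 : 0 ≤ r^(Q-2) := (Real.rpow_pos_of_pos hr0 _).le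
  have h4 := aux_pow Q hQ
  have h5 : Q * r^(Q-2) ≤ 1/100 :=
    le_trans (mul_le_mul_of_nonneg_left hp (by linarith)) h4
  have h6 : 3/(3-2*d)^2 ≤ 1 := by
    rw [div_le_one (by positivity)]; nlinarith
  have h60 : 0 ≤ 3/(3-2*d)^2 := by positivity
  rw [div_le_iff₀ (by linarith), e]
  have h7 : 3/(3-2*d)^2 * (Q * r^(Q-2)) ≤ 1 * (1/100) :=
    mul_le_mul h6 h5 (mul_nonneg (by linarith) hp0) (by norm_num)
  have h8 := mul_le_mul_of_nonneg_right h7 hr0.le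
  have : 2 * (3 / (3 - 2 * d) ^ 2 * Q * (r ^ (Q - 2) * r)) = 2 * (3/(3-2*d)^2 * (Q * r^(Q-2)) * r) := by
    ring
  rw [this]
  nlinarith [mul_pos hd0 hrQ]

/-- Logarithm of the function in part (a), with `d = 1 - y`. -/
noncomputable def LA (s t a Q d : ℝ) : ℝ :=
  Real.log (1 + 2 * q (s - t * d) / q s) - Q * Real.log (1 - 2 * a * (d * (1-d)/(3-2*d)))
    + Real.log (1 + 2 * (d/(3-2*d))^Q)

lemma q_nonneg (x : ℝ) : 0 ≤ q x := by
  have := Real.add_one_le_exp x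
  unfold q; linarith

lemma h_bounds (a d : ℝ) (ha0 : 0 ≤ a) (ha : a ≤ 7/150) (hd0 : 0 ≤ d) (hd : d ≤ 6/10) :
    0 < 1 - 2 * a * (d * (1-d)/(3-2*d)) := by
  have h3 : 0 < 3 - 2*d := by linarith
  have hh : d * (1-d)/(3-2*d) ≤ d/3 := by
    rw [div_le_div_iff₀ h3 (by norm_num)]; nlinarith
  have hh0 : 0 ≤ d * (1-d)/(3-2*d) := div_nonneg (mul_nonneg hd0 (by linarith)) h3.le
  nlinarith

lemma LA_deriv (s t a Q d : ℝ) (hs : 15 ≤ s) (hQ : 15 ≤ Q) (ha0 : 0 ≤ a) (ha : a ≤ 7/150)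
    (hd0 : 0 ≤ d) (hd : d ≤ 6/10) :
    HasDerivAt (LA s t a Q)
      (-(2 * t * (Real.exp (s - t * d) - 1) / q s) / (1 + 2 * q (s - t * d) / q s)
        - Q * (-(2 * a * ((3 - 6*d + 2*d^2) / (3-2*d)^2)) / (1 - 2 * a * (d * (1-d)/(3-2*d))))
        + 2 * (3/(3-2*d)^2 * Q * (d/(3-2*d))^(Q-1)) / (1 + 2 * (d/(3-2*d))^Q)) d := by
  have h3 : 0 < 3 - 2*d := by linarith
  have hq := aux_q s hs
  have hl : HasDerivAt (fun d : ℝ => 3 - 2*d) (-2) d := by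
    simpa using ((hasDerivAt_id d).const_mul 2).const_sub 3
  have hx : HasDerivAt (fun d : ℝ => s - t*d) (-t) d := by
    simpa using ((hasDerivAt_id d).const_mul t).const_sub s
  have hq1 : HasDerivAt (fun d : ℝ => 1 + 2 * q (s - t * d) / q s)
      (-(2 * t * (Real.exp (s - t * d) - 1) / q s)) d := by
    have := (((((hx.exp.sub hx).sub_const 1).const_mul 2).div_const (q s)).const_add 1)
    refine this.congr_deriv ?_
    ring
  have hr : HasDerivAt (fun d : ℝ => d/(3-2*d)) (3/(3-2*d)^2) d := by
    refine ((hasDerivAt_id d).div hl h3.ne').congr_deriv ?_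
    simp only [id]
    congr 1; ring
  have hh : HasDerivAt (fun d : ℝ => 1 - 2 * a * (d*(1-d)/(3-2*d)))
      (-(2 * a * ((3 - 6*d + 2*d^2) / (3-2*d)^2))) d := by
    have hn : HasDerivAt (fun d : ℝ => d*(1-d)) (1 - 2*d) d := by
      refine ((hasDerivAt_id d).mul ((hasDerivAt_id d).const_sub 1)).congr_deriv ?_
      simp only [id]; ring
    refine (((hn.div hl h3.ne').const_mul (2*a)).const_sub 1).congr_deriv ?_
    congr 3; ring
  have hp : HasDerivAt (fun d : ℝ => 1 + 2 * (d/(3-2*d))^Q)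
      (2 * (3/(3-2*d)^2 * Q * (d/(3-2*d))^(Q-1))) d :=
    ((hr.rpow_const (Or.inr (by linarith))).const_mul 2).const_add 1
  have n1 : 1 + 2 * q (s - t * d) / q s ≠ 0 := by
    have := div_nonneg (mul_nonneg (by norm_num : (0:ℝ) ≤ 2) (q_nonneg (s - t*d))) hq.le
    linarith
  have n2 := (h_bounds a d ha0 ha hd0 hd).ne'
  have n3 : 1 + 2 * (d/(3-2*d))^Q ≠ 0 := by
    have := Real.rpow_nonneg (div_nonneg hd0 h3.le) Q
    linarith
  exact ((hq1.log n1).sub ((hh.log n2).const_mul Q)).add (hp.log n3)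

lemma LA_anti (s t a Q : ℝ) (hs : 15 ≤ s) (ht : t * (Real.exp s - 1) = 7/10 * q s)
    (hQ : 15 ≤ Q) (ha0 : 0 ≤ a) (ha : a ≤ 7/150) (haQ : a * Q = 7/10) :
    StrictAntiOn (LA s t a Q) (Set.Icc 0 (6/10)) := by
  apply strictAntiOn_of_deriv_neg (convex_Icc _ _)
  · intro d hd
    exact (LA_deriv s t a Q d hs hQ ha0 ha hd.1 hd.2).continuousAt.continuousWithinAt
  · intro d hd
    rw [interior_Icc] at hd
    obtain ⟨hd0, hd1⟩ := hd
    rw [(LA_deriv s t a Q d hs hQ ha0 ha hd0.le hd1.le).deriv]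
    have hq := aux_q s hs
    have b1 := partA_f1 s t d hs ht hd0.le hd1.le
    have b2 := partA_f2 a d ha0 ha hd0.le hd1.le
    have b3 := partA_f3 Q d hQ hd0 hd1.le
    have n1 : 0 < 1 + 2 * q (s - t * d) / q s := by
      have := div_nonneg (mul_nonneg (by norm_num : (0:ℝ) ≤ 2) (q_nonneg (s - t*d))) hq.le
      linarith
    have b1' := (le_div_iff₀ n1).2 b1
    rw [neg_div]
    have e2 : Q * (-(2 * a * ((3 - 6*d + 2*d^2) / (3-2*d)^2)) / (1 - 2 * a * (d * (1-d)/(3-2*d))))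
      = - (7/5 * ((3 - 6*d + 2*d^2) / (3-2*d)^2 / (1 - 2 * a * (d * (1-d)/(3-2*d))))) := by
      linear_combination (-2 * ((3 - 6*d + 2*d^2) / (3-2*d)^2 / (1 - 2 * a * (d * (1-d)/(3-2*d))))) * haQ
    rw [e2]
    linarith

lemma OPT_eq_LA (s y : ℝ) (hs : 15 ≤ s) (hy : y ∈ Set.Icc (4/10 : ℝ) 1) :
    OPT 1 (1 + 7/(10 * Qf s) * y - 7/(10 * Qf s))
          (1 + 7/(10 * Qf s) * y - 7/(10 * Qf s)) 1 y y s
      = Real.exp (LA s (s * (7/(10 * Qf s))) (7/(10 * Qf s)) (Qf s) (1 - y)) := by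
  have hQ := aux_Q s hs
  have hq := aux_q s hs
  obtain ⟨hy0, hy1⟩ := hy
  have ha0 : 0 ≤ 7/(10 * Qf s) := by positivity
  have ha : 7/(10 * Qf s) ≤ 7/150 := by
    apply div_le_div_of_nonneg_left <;> linarith
  have hb := h_bounds _ (1-y) ha0 ha (by linarith) (by linarith)
  set a := 7/(10 * Qf s)
  set Q := Qf s
  have h12 : 0 < 1 + 2*y := by linarith
  have e32 : 3 - 2*(1-y) = 1 + 2*y := by ring
  unfold LA OPT
  rw [e32] at hb ⊢
  have n1 : 0 < 1 + 2 * q (s - s * a * (1-y)) / q s := by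
    have := div_nonneg (mul_nonneg (by norm_num : (0:ℝ) ≤ 2) (q_nonneg (s - s*a*(1-y)))) hq.le
    linarith
  have hr0 : 0 ≤ (1-y)/(1+2*y) := div_nonneg (by linarith) h12.le
  have n3 : 0 < 1 + 2 * ((1-y)/(1+2*y))^Q := by
    have := Real.rpow_nonneg hr0 Q
    linarith
  rw [Real.exp_add, Real.exp_sub, Real.exp_log n1, Real.exp_log n3, mul_comm Q,
    ← Real.rpow_def_of_pos hb]
  have g1 : (q (s * 1) + q (s * (1 + a * y - a)) + q (s * (1 + a * y - a))) / q s
      = 1 + 2 * q (s - s * a * (1-y)) / q s := by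
    rw [mul_one, show s * (1 + a * y - a) = s - s * a * (1-y) by ring]
    field_simp; ring
  have g2 : (1 * 1 + (1 + a * y - a) * y + (1 + a * y - a) * y)
      = (1 + 2*y) * (1 - 2 * a * ((1-y) * (1-(1-y))/(1+2*y))) := by
    field_simp; ring
  have g3 : ((1:ℝ)^2 + y^2 + y^2 - 1*y - 1*y - y*y) ^ (Q/2) = (1-y)^Q := by
    rw [show (1:ℝ)^2 + y^2 + y^2 - 1*y - 1*y - y*y = (1-y)^(2:ℝ) by
      rw [Real.rpow_two]; ring, ← Real.rpow_mul (by linarith)]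
    congr 1; ring
  rw [g1, g2, g3, one_div, Real.inv_rpow (by positivity), Real.mul_rpow h12.le hb.le,
    Real.div_rpow (by linarith) h12.le, show 1 + y + y = 1 + 2*y by ring]
  have hP : 0 < (1+2*y)^Q := Real.rpow_pos_of_pos h12 _
  have hR := Real.rpow_pos_of_pos hb Q
  rw [mul_inv]
  generalize (1+2*y)^Q = P at *
  generalize (1 - 2 * a * ((1-y) * (1-(1-y))/(1+2*y)))^Q = R at *
  field_simp

/-! ### Part (b) -/

lemma sinh_le_aux (v : ℝ) (h0 : 0 ≤ v) (h1 : v ≤ 35/100) : Real.sinh v ≤ 1175/1000 * v := by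
  have h := Real.abs_exp_sub_one_sub_id_le (x := v) (by rw [abs_of_nonneg h0]; linarith)
  have h2 := (abs_le.1 h).2
  have h3 := Real.add_one_le_exp (-v)
  rw [Real.sinh_eq]
  nlinarith

lemma cosh_sub_le (u v : ℝ) (h0 : 0 ≤ u) (huv : u ≤ v) (h1 : v ≤ 35/100) :
    Real.cosh v - Real.cosh u ≤ 7/10 * (v^2 - u^2) := by
  have e : Real.cosh v - Real.cosh u = 2 * (Real.sinh ((v+u)/2) * Real.sinh ((v-u)/2)) := by
    have e1 : v = (v+u)/2 + (v-u)/2 := by ring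
    have e2 : u = (v+u)/2 - (v-u)/2 := by ring
    conv_lhs => rw [e1]
    conv_lhs => enter [2]; rw [e2]
    rw [Real.cosh_add, Real.cosh_sub]
    ring_nf
  have a1 := sinh_le_aux ((v+u)/2) (by linarith) (by linarith)
  have a2 := sinh_le_aux ((v-u)/2) (by linarith) (by linarith)
  have a3 : 0 ≤ Real.sinh ((v-u)/2) := Real.sinh_nonneg_iff.2 (by linarith)
  have := mul_le_mul a1 a2 a3 (by linarith)
  rw [e]
  nlinarith

lemma partB_f1 (s t d z w : ℝ) (hs : 15 ≤ s) (t0 : 0 < t) (t1 : t ≤ 7/10)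
    (hd0 : 0 ≤ d) (hd : d ≤ 6/10) (hz : 0 ≤ z) (hzw : z ≤ w) (hw : w ≤ 1/2) :
    0 < q (s - t*d + t*z) + q (s - t*d - t*z) ∧
    (q s + q (s - t*d + t*w) + q (s - t*d - t*w)) / q s ≤
    (q s + q (s - t*d + t*z) + q (s - t*d - t*z)) / q s * Real.exp (4/10 * (w^2 - z^2)) := by
  have h := aux_E s hs
  have hq := aux_q s hs
  have hE := Real.exp_pos s
  have key : ∀ z, q (s - t*d + t*z) + q (s - t*d - t*z)
      = 2 * Real.exp (s - t*d) * Real.cosh (t*z) - 2 * (s - t*d) - 2 := by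
    intro z
    unfold q
    rw [Real.cosh_eq, Real.exp_add, sub_eq_add_neg (s - t*d) (t*z), Real.exp_add]
    ring
  have hX1 : Real.exp (s - t*d) ≤ Real.exp s := Real.exp_le_exp.2 (by nlinarith)
  have hX2 : 58/100 * Real.exp s ≤ Real.exp (s - t*d) := by
    have hx : Real.exp (s - t * d) = Real.exp s * Real.exp (-(t * d)) := by
      rw [← Real.exp_add]; ring_nf
    have h1 := Real.add_one_le_exp (-(t*d))
    have h2 : 58/100 ≤ Real.exp (-(t*d)) := by nlinarith
    rw [hx]; nlinarith
  have htd : 0 ≤ t * d := by positivity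
  have hqs : q s = Real.exp s - s - 1 := rfl
  have hlow : q s ≤ q (s - t*d + t*z) + q (s - t*d - t*z) := by
    rw [key]
    have hc := Real.one_le_cosh (t*z)
    have := mul_le_mul_of_nonneg_left hc (Real.exp_pos (s - t*d)).le
    rw [hqs]; nlinarith
  refine ⟨by linarith, ?_⟩
  rw [div_mul_eq_mul_div]
  apply div_le_div_of_nonneg_right _ hq.le
  have hD : 0 ≤ w^2 - z^2 := by nlinarith
  have hexp := Real.add_one_le_exp (4/10 * (w^2 - z^2))
  have hN : 2 * q s ≤ q s + q (s - t*d + t*z) + q (s - t*d - t*z) := by linarith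
  have hstep : q s + q (s - t*d + t*z) + q (s - t*d - t*z) + 2 * q s * (4/10 * (w^2 - z^2)) ≤
      (q s + q (s - t*d + t*z) + q (s - t*d - t*z)) * Real.exp (4/10 * (w^2 - z^2)) := by
    have i1 := mul_le_mul_of_nonneg_left hexp (show 0 ≤ q s + q (s - t*d + t*z) + q (s - t*d - t*z) by linarith)
    have i2 := mul_le_mul_of_nonneg_right hN (show 0 ≤ 4/10 * (w^2 - z^2) by linarith)
    linarith
  refine le_trans ?_ hstep
  have hc := cosh_sub_le (t*z) (t*w) (by positivity) (mul_le_mul_of_nonneg_left hzw t0.le)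
    (by nlinarith)
  have hc' : Real.cosh (t*w) - Real.cosh (t*z) ≤ 343/1000 * (w^2 - z^2) := by
    have : t^2 ≤ 49/100 := by nlinarith
    nlinarith
  have hX0 := Real.exp_pos (s - t*d)
  have k1 := mul_le_mul_of_nonneg_left hc' hX0.le
  have k2 : Real.exp (s - t*d) * (343/1000) ≤ q s * (4/10) := by rw [hqs]; linarith
  have k3 := mul_le_mul_of_nonneg_right k2 hD
  have kz := key z
  have kw := key w
  nlinarith

lemma partB_f2 (a Q y z w P1 P2 : ℝ) (hQ : 15 ≤ Q) (haQ : a * Q = 7/10)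
    (hzw : z^2 ≤ w^2) (hP1 : 0 < P1) (hP2 : P2 ≤ 3) (hP : P2 = P1 + 2 * a * (w^2 - z^2))
    (ha : 0 ≤ a) :
    (1/P2)^Q ≤ (1/P1)^Q * Real.exp (-(14/30) * (w^2 - z^2)) := by
  have hD : 0 ≤ w^2 - z^2 := by linarith
  have hP20 : 0 < P2 := by rw [hP]; positivity
  rw [Real.rpow_def_of_pos (by positivity), Real.rpow_def_of_pos (by positivity), ← Real.exp_add]
  apply Real.exp_le_exp.2
  have hl : Real.log (1/P2) = Real.log (1/P1) + Real.log (P1/P2) := by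
    rw [← Real.log_mul (by positivity) (by positivity)]
    congr 1; field_simp
  have h1 := Real.log_le_sub_one_of_pos (show 0 < P1/P2 by positivity)
  have h2 : P1/P2 - 1 ≤ -(2 * a * (w^2 - z^2) / 3) := by
    have e : P1/P2 - 1 = -(2 * a * (w^2 - z^2) / P2) := by
      rw [show P1 = P2 - 2 * a * (w^2 - z^2) by linarith]; field_simp; ring
    rw [e]
    have := div_le_div_of_nonneg_left (show 0 ≤ 2 * a * (w^2 - z^2) by positivity) hP20 hP2
    linarith
  have h3 : Q * Real.log (P1/P2) ≤ Q * (-(2 * a * (w^2 - z^2) / 3)) :=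
    mul_le_mul_of_nonneg_left (by linarith) (by linarith)
  have h4 : Q * (-(2 * a * (w^2 - z^2) / 3)) = -(14/30) * (w^2 - z^2) := by
    linear_combination (-(2/3) * (w^2 - z^2)) * haQ
  rw [hl]
  linarith

lemma partB_f3 (Q y z w : ℝ) (hQ : 15 ≤ Q) (hy0 : 4/10 ≤ y) (hy1 : y ≤ 1)
    (hz : 0 ≤ z) (hzw : z < w) (hw : w ≤ y) (hw1 : w ≤ 1 - y) :
    ((1+2*y)^Q + 2 * ((1-y)^2 + 3*w^2)^(Q/2)) ≤
    ((1+2*y)^Q + 2 * ((1-y)^2 + 3*z^2)^(Q/2)) * Real.exp (2/100 * (w^2 - z^2)) := by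
  have hS : 0 < 1 + 2*y := by linarith
  have hSQ : 0 < (1+2*y)^Q := Real.rpow_pos_of_pos hS _
  have hD : 0 ≤ w^2 - z^2 := by nlinarith
  have hw0 : 0 < w := by linarith
  have hW : 0 < (1-y)^2 + 3*w^2 := by positivity
  have hZ : 0 ≤ (1-y)^2 + 3*z^2 := by positivity
  have hWS : (1-y)^2 + 3*w^2 ≤ ((51/100) * (1+2*y))^2 := by
    rcases le_total y (1/2) with h | h
    · nlinarith
    · nlinarith
  set W := (1-y)^2 + 3*w^2 with hWd
  set Z := (1-y)^2 + 3*z^2 with hZd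
  have bern := one_add_mul_self_le_rpow_one_add (s := Z/W - 1) (by have := div_nonneg hZ hW.le; linarith)
    (p := Q/2) (by linarith)
  rw [show 1 + (Z/W - 1) = Z/W by ring, Real.div_rpow hZ hW.le] at bern
  have hWQ : 0 < W^(Q/2) := Real.rpow_pos_of_pos hW _
  rw [le_div_iff₀ hWQ] at bern
  have eW : W^(Q/2) = W^(Q/2-1) * W := by
    rw [← Real.rpow_add_one hW.ne']; congr 1; ring
  have bern2 : W^(Q/2) - Z^(Q/2) ≤ Q/2 * W^(Q/2-1) * (W - Z) := by
    have : (1 + Q/2 * (Z/W - 1)) * W^(Q/2) = W^(Q/2) - Q/2 * W^(Q/2-1) * (W - Z) := by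
      rw [eW]; field_simp; ring
    linarith
  have hWp : W^(Q/2-1) ≤ (51/100)^(Q-2) * (1+2*y)^(Q-2) := by
    calc W^(Q/2-1) ≤ (((51/100) * (1+2*y))^2)^(Q/2-1) :=
          Real.rpow_le_rpow hW.le hWS (by linarith)
      _ = ((51/100) * (1+2*y))^(Q-2) := by
          rw [← Real.rpow_two, ← Real.rpow_mul (by positivity)]; congr 1; ring
      _ = _ := Real.mul_rpow (by norm_num) hS.le
  have hS2 : (1+2*y)^(Q-2) * 3 ≤ (1+2*y)^Q := by
    have : (1+2*y)^Q = (1+2*y)^(Q-2) * (1+2*y)^2 := by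
      rw [← Real.rpow_two, ← Real.rpow_add hS]; congr 1; ring
    rw [this]
    apply mul_le_mul_of_nonneg_left _ (Real.rpow_nonneg hS.le _)
    nlinarith
  have hS20 := Real.rpow_nonneg hS.le (Q-2)
  have hp := aux_pow Q hQ
  have hmain : 2 * (W^(Q/2) - Z^(Q/2)) ≤ (1+2*y)^Q * (2/100 * (w^2 - z^2)) := by
    have hWZ : W - Z = 3 * (w^2 - z^2) := by rw [hWd, hZd]; ring
    rw [hWZ] at bern2
    have i1 : Q * W^(Q/2-1) ≤ 1/100 * (1+2*y)^(Q-2) := by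
      calc Q * W^(Q/2-1) ≤ Q * ((51/100)^(Q-2) * (1+2*y)^(Q-2)) :=
            mul_le_mul_of_nonneg_left hWp (by linarith)
        _ = (Q * (51/100)^(Q-2)) * (1+2*y)^(Q-2) := by ring
        _ ≤ _ := mul_le_mul_of_nonneg_right hp hS20
    have i2 := mul_le_mul_of_nonneg_right i1 hD
    have i3 := mul_le_mul_of_nonneg_right hS2 hD
    nlinarith [mul_nonneg hSQ.le hD]
  have hexp := Real.add_one_le_exp (2/100 * (w^2 - z^2))
  have hZQ : 0 ≤ Z^(Q/2) := Real.rpow_nonneg hZ _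
  have j1 := mul_le_mul_of_nonneg_left hexp (show 0 ≤ (1+2*y)^Q + 2 * Z^(Q/2) by linarith)
  have j2 : 0 ≤ Z^(Q/2) * (2/100 * (w^2 - z^2)) := by positivity
  nlinarith

lemma partB (s y : ℝ) (hs : 15 ≤ s) (hy : y ∈ Set.Icc (4/10 : ℝ) 1) :
      AntitoneOn
        (fun z => OPT 1 (1 + 7/(10 * Qf s) * (y+z) - 7/(10 * Qf s))
          (1 + 7/(10 * Qf s) * (y-z) - 7/(10 * Qf s)) 1 (y+z) (y-z) s)
        (Set.Icc 0 (min y (1-y))) := by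
  intro z hz w hw hzw
  rcases hzw.eq_or_lt with rfl | hlt
  · exact le_rfl
  obtain ⟨hy0, hy1⟩ := hy
  have hz0 := hz.1
  have hwy := le_trans hw.2 (min_le_left _ _)
  have hwy1 := le_trans hw.2 (min_le_right _ _)
  have hQ := aux_Q s hs
  have hq := aux_q s hs
  have ht := aux_t s hs
  obtain ⟨t0, t1, -⟩ := aux_t_bounds s _ hs ht
  have ha0 : 0 < 7/(10 * Qf s) := by positivity
  have ha : 7/(10 * Qf s) ≤ 7/150 := by
    apply div_le_div_of_nonneg_left <;> linarith
  have haQ : 7/(10 * Qf s) * Qf s = 7/10 := by field_simp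
  set a := 7/(10 * Qf s)
  set Q := Qf s with hQd
  have expand : ∀ z, OPT 1 (1 + a * (y+z) - a) (1 + a * (y-z) - a) 1 (y+z) (y-z) s
     = (q s + q (s - s*a*(1-y) + s*a*z) + q (s - s*a*(1-y) - s*a*z)) / q s *
       (1 / (1 + 2*y*(1 - a*(1-y)) + 2*a*z^2))^Q *
       ((1+2*y)^Q + 2 * ((1-y)^2 + 3*z^2)^(Q/2)) := by
    intro z
    unfold OPT
    rw [← hQd]
    ring_nf
  show OPT 1 (1 + a * (y+w) - a) (1 + a * (y-w) - a) 1 (y+w) (y-w) s ≤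
    OPT 1 (1 + a * (y+z) - a) (1 + a * (y-z) - a) 1 (y+z) (y-z) s
  rw [expand, expand]
  have hsq : z^2 ≤ w^2 := by nlinarith
  have hAp : 0 < 1 - a*(1-y) := by nlinarith
  have hP1 : 0 < 1 + 2*y*(1 - a*(1-y)) + 2*a*z^2 := by
    have : 0 < 2*y*(1 - a*(1-y)) := by apply mul_pos <;> linarith
    positivity
  have hP2 : 1 + 2*y*(1 - a*(1-y)) + 2*a*w^2 ≤ 3 := by
    have : w^2 ≤ y*(1-y) := by nlinarith
    nlinarith
  obtain ⟨p1, b1⟩ := partB_f1 s (s*a) (1-y) z w hs t0 t1 (by linarith) (by linarith) hz0 hzw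
    (by linarith)
  have b2 := partB_f2 a Q y z w _ _ hQ haQ hsq hP1 hP2 (by ring) ha0.le
  have b3 := partB_f3 Q y z w hQ hy0 hy1 hz0 hlt hwy hwy1
  set F1w := (q s + q (s - s*a*(1-y) + s*a*w) + q (s - s*a*(1-y) - s*a*w)) / q s
  have F1z0 : 0 ≤ (q s + q (s - s*a*(1-y) + s*a*z) + q (s - s*a*(1-y) - s*a*z)) / q s :=
    div_nonneg (by linarith) hq.le
  set F1z := (q s + q (s - s*a*(1-y) + s*a*z) + q (s - s*a*(1-y) - s*a*z)) / q s
  have F2z0 : 0 ≤ (1 / (1 + 2*y*(1 - a*(1-y)) + 2*a*z^2))^Q :=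
    Real.rpow_nonneg (by positivity) _
  have F2w0 : 0 ≤ (1 / (1 + 2*y*(1 - a*(1-y)) + 2*a*w^2))^Q := by
    apply Real.rpow_nonneg
    apply one_div_nonneg.2
    nlinarith
  have F3z0 : 0 ≤ (1+2*y)^Q + 2 * ((1-y)^2 + 3*z^2)^(Q/2) := by positivity
  have F3w0 : 0 ≤ (1+2*y)^Q + 2 * ((1-y)^2 + 3*w^2)^(Q/2) := by positivity
  set F2z := (1 / (1 + 2*y*(1 - a*(1-y)) + 2*a*z^2))^Q
  set F2w := (1 / (1 + 2*y*(1 - a*(1-y)) + 2*a*w^2))^Q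
  set F3z := (1+2*y)^Q + 2 * ((1-y)^2 + 3*z^2)^(Q/2)
  set F3w := (1+2*y)^Q + 2 * ((1-y)^2 + 3*w^2)^(Q/2)
  calc F1w * F2w * F3w
      ≤ (F1z * Real.exp (4/10 * (w^2 - z^2))) * (F2z * Real.exp (-(14/30) * (w^2 - z^2))) *
        (F3z * Real.exp (2/100 * (w^2 - z^2))) := by
        apply mul_le_mul _ b3 F3w0 (by positivity)
        exact mul_le_mul b1 b2 F2w0 (by positivity)
    _ = F1z * F2z * F3z * (Real.exp (4/10 * (w^2 - z^2)) * Real.exp (-(14/30) * (w^2 - z^2)) *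
          Real.exp (2/100 * (w^2 - z^2))) := by ring
    _ ≤ F1z * F2z * F3z * 1 := by
        apply mul_le_mul_of_nonneg_left _ (by positivity)
        rw [← Real.exp_add, ← Real.exp_add]
        apply Real.exp_le_one_iff.2
        linarith
    _ = _ := mul_one _

theorem stmt9 (s : ℝ) (hs : 15 ≤ s) :
    (StrictMonoOn
        (fun y => OPT 1 (1 + 7/(10 * Qf s) * y - 7/(10 * Qf s))
          (1 + 7/(10 * Qf s) * y - 7/(10 * Qf s)) 1 y y s)
        (Set.Icc (4/10 : ℝ) 1) ∧
      OPT 1 (1 + 7/(10 * Qf s) * 1 - 7/(10 * Qf s))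
        (1 + 7/(10 * Qf s) * 1 - 7/(10 * Qf s)) 1 1 1 s = 3) ∧
    ∀ y ∈ Set.Icc (4/10 : ℝ) 1,
      AntitoneOn
        (fun z => OPT 1 (1 + 7/(10 * Qf s) * (y+z) - 7/(10 * Qf s))
          (1 + 7/(10 * Qf s) * (y-z) - 7/(10 * Qf s)) 1 (y+z) (y-z) s)
        (Set.Icc 0 (min y (1-y))) := by
  have hQ := aux_Q s hs
  have hq := aux_q s hs
  have ha0 : 0 ≤ 7/(10 * Qf s) := by positivity
  have ha : 7/(10 * Qf s) ≤ 7/150 := by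
    apply div_le_div_of_nonneg_left <;> linarith
  have haQ : 7/(10 * Qf s) * Qf s = 7/10 := by field_simp
  refine ⟨⟨?_, ?_⟩, fun y hy => partB s y hs hy⟩
  · intro y hy w hw hyw
    show OPT _ _ _ _ _ _ _ < OPT _ _ _ _ _ _ _
    rw [OPT_eq_LA s y hs hy, OPT_eq_LA s w hs hw]
    apply Real.exp_lt_exp.2
    apply LA_anti s _ _ _ hs (aux_t s hs) hQ ha0 ha haQ
    · constructor <;> linarith [hw.1, hw.2]
    · constructor <;> linarith [hy.1, hy.2]
    · linarith
  · rw [OPT_eq_LA s 1 hs (by norm_num)]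
    unfold LA
    have : Qf s ≠ 0 := by linarith
    simp only [sub_self, mul_zero, sub_zero, zero_mul, zero_div, Real.log_one,
      Real.zero_rpow this, add_zero]
    rw [mul_div_assoc, div_self hq.ne', Real.exp_log (by norm_num)]
    norm_num
end
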